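/- Suppose the stabilizer G of (K,S) in SO(3) is a cyclic group of order 3. Then there exists an orthonormal basis {e₁,e₂,e₃} of V such that (K,S) is in Z₃-canonical form with parameters (λ,μ,a,b) satisfying either (λ > 0, μ > 0 and μ ≠ √2·λ) or (μ = √2·λ > 0 and a ≠ b). Moreover G = {id, R₁, R₁²}, where R₁ is the rotation by angle 2π/3 about the axis e₁. -/

import Mathlib

/-!
Let `g` generate the stabilizer. The operator `1 + g + g²` is nonzero in odd dimension, and its
image consists of fixed vectors of `g`, so `g` fixes a unit vector `e₁`; its sign is chosen so
that `⟪K e₁ e₁, e₁⟫ ≥ 0` (`exists_fixed_unit`). On the orthogonal plane `g` is then a rotation by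
`±2π/3` (`order_three_form`). Such a rotation leaves invariant no nonzero linear form on the plane
and no symmetric bilinear form besides multiples of the inner product; with apolarity this leaves
for `(K,S)` only `λ`, `a`, `b` and a harmonic binary cubic form on the plane (`invariant_form`).
A rotation of `e₂, e₃` about `e₁` brings that cubic form to `μ Re z³` with `μ ≥ 0`
(`exists_rotated_basis`), which is the `Z₃`-canonical form.

Every element of the stabilizer has cube `1`, so it contains no half-turn. If `μ = 0`, if `λ = 0`,
or if `μ = √2 λ` and `a = b`, an explicit half-turn does preserve `(K,S)`; hence the constraints on
the parameters (`parameter_constraints`). Finally the matrix of `g` is `R₁` or `R₁²`, and in both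
cases the group it generates is `{1, R₁, R₁²}`.
-/


/-!
Setting (affine hypersurfaces admitting a pointwise symmetry, algebraic part):
`V₃ = ℝ³` with its standard inner product `h = ⟪·,·⟫`.  `K` is a symmetric bilinear
map `V₃ × V₃ → V₃` whose cubic form `h(K(X,Y),Z)` is totally symmetric and which
satisfies the apolarity condition (`K_X` trace-free), `S` is an `h`-symmetric
endomorphism.  `stab K S` is the stabilizer of the pair `(K,S)` inside `SO(3)`.
-/

noncomputable section

open scoped RealInnerProductSpace

/-- The 3-dimensional Euclidean space `ℝ³` with its standard inner product. -/
abbrev V₃ := EuclideanSpace ℝ (Fin 3)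

/-- A symmetric bilinear map `K` is admissible (a difference tensor) if the cubic form
`(X,Y,Z) ↦ ⟪K X Y, Z⟫` is totally symmetric and `K_X := K X ·` is trace-free for all `X`. -/
def IsAdmissibleK (K : V₃ →ₗ[ℝ] V₃ →ₗ[ℝ] V₃) : Prop :=
  (∀ X Y, K X Y = K Y X) ∧
  (∀ X Y Z, ⟪K X Y, Z⟫ = ⟪K X Z, Y⟫) ∧
  (∀ X, LinearMap.trace ℝ V₃ (K X) = 0)

/-- `S` is a symmetric endomorphism with respect to the inner product. -/
def IsSymmEndo (S : V₃ →ₗ[ℝ] V₃) : Prop := ∀ X Y, ⟪S X, Y⟫ = ⟪X, S Y⟫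

/-- The stabilizer of the pair `(K,S)` inside `SO(3)`: all orientation-preserving
(i.e. determinant `1`) linear isometries `g` of `ℝ³` with `K(gX,gY) = g(K(X,Y))`
and `S(gX) = g(SX)` for all `X, Y`. -/
def stab (K : V₃ →ₗ[ℝ] V₃ →ₗ[ℝ] V₃) (S : V₃ →ₗ[ℝ] V₃) : Set (V₃ ≃ₗᵢ[ℝ] V₃) :=
  {g | LinearMap.det (g.toLinearEquiv : V₃ →ₗ[ℝ] V₃) = 1 ∧
    (∀ X Y, K (g X) (g Y) = g (K X Y)) ∧ (∀ X, S (g X) = g (S X))}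

/-- The matrix of `g` with respect to the orthonormal basis `e`: column `j` consists of
the coordinates of `g (e j)` in the basis `e`. -/
def matrixOf (e : OrthonormalBasis (Fin 3) ℝ V₃) (g : V₃ ≃ₗᵢ[ℝ] V₃) :
    Matrix (Fin 3) (Fin 3) ℝ :=
  Matrix.of fun i j => ⟪e i, g (e j)⟫

/-- The standard orthonormal basis `{e₁, e₂, e₃}` of `ℝ³`. -/
def stdB : OrthonormalBasis (Fin 3) ℝ V₃ := EuclideanSpace.basisFun (Fin 3) ℝ

/-- Matrix of the rotation by angle `θ` about the first basis vector `e₁`. -/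
def rotMat (θ : ℝ) : Matrix (Fin 3) (Fin 3) ℝ :=
  !![1, 0, 0; 0, Real.cos θ, -Real.sin θ; 0, Real.sin θ, Real.cos θ]

/-- Matrix of the rotation by angle `π` about the axis `cos (θ/2) e₂ + sin (θ/2) e₃`
in the plane orthogonal to `e₁`. -/
def flipMat (θ : ℝ) : Matrix (Fin 3) (Fin 3) ℝ :=
  !![-1, 0, 0; 0, Real.cos θ, Real.sin θ; 0, Real.sin θ, -Real.cos θ]

/-- The set of all rotations about the axis `e 0` (the first vector of the basis `e`). -/
def rotSet (e : OrthonormalBasis (Fin 3) ℝ V₃) : Set (V₃ ≃ₗᵢ[ℝ] V₃) :=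
  {g | ∃ θ : ℝ, matrixOf e g = rotMat θ}

/-- The set of all rotations by angle `π` about axes orthogonal to `e 0`. -/
def flipSet (e : OrthonormalBasis (Fin 3) ℝ V₃) : Set (V₃ ≃ₗᵢ[ℝ] V₃) :=
  {g | ∃ θ : ℝ, matrixOf e g = flipMat θ}

/-- The whole of `SO(3)`, as a set of linear isometries of `ℝ³`. -/
def so3Set : Set (V₃ ≃ₗᵢ[ℝ] V₃) :=
  {g | LinearMap.det (g.toLinearEquiv : V₃ →ₗ[ℝ] V₃) = 1}

/-- Matrix of `P₁`, the rotation by angle `π` about `e₁`. -/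
def P1mat : Matrix (Fin 3) (Fin 3) ℝ := !![1, 0, 0; 0, -1, 0; 0, 0, -1]

/-- Matrix of `P₂`, the rotation by angle `π` about `e₂`. -/
def P2mat : Matrix (Fin 3) (Fin 3) ℝ := !![-1, 0, 0; 0, 1, 0; 0, 0, -1]

/-- Matrix of `P₃`, the rotation by angle `π` about `e₃`. -/
def P3mat : Matrix (Fin 3) (Fin 3) ℝ := !![-1, 0, 0; 0, -1, 0; 0, 0, 1]

/-- Matrix of `R₁`, the rotation by angle `2π/3` about `e₁`. -/
def R1mat : Matrix (Fin 3) (Fin 3) ℝ :=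
  !![1, 0, 0; 0, -(1/2), -(Real.sqrt 3/2); 0, Real.sqrt 3/2, -(1/2)]

/-- Matrix of `R₃`, the rotation by angle `2π/3` about `e₃`. -/
def R3mat : Matrix (Fin 3) (Fin 3) ℝ :=
  !![-(1/2), -(Real.sqrt 3/2), 0; Real.sqrt 3/2, -(1/2), 0; 0, 0, 1]

/-- Matrix of `Q`, the rotation by angle `2π/3` about the axis `e₁ + e₂ + e₃`
(the cyclic permutation `e₁ ↦ e₂ ↦ e₃ ↦ e₁`). -/
def Qmat : Matrix (Fin 3) (Fin 3) ℝ := !![0, 0, 1; 1, 0, 0; 0, 1, 0]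

/-- The matrices of the Klein four-group `{id, P₁, P₂, P₃} ≅ Z₂ × Z₂`. -/
def kleinMatSet : Set (Matrix (Fin 3) (Fin 3) ℝ) := {1, P1mat, P2mat, P3mat}

/-- The matrices of the order-6 group `⟨P₁, R₃⟩ ≅ S₃`. -/
def s3MatSet : Set (Matrix (Fin 3) (Fin 3) ℝ) :=
  {1, R3mat, R3mat * R3mat, P1mat, P1mat * R3mat, R3mat * P1mat}

/-- The matrices of the order-12 group `⟨P₁, P₂, Q⟩ ≅ A₄`. -/
def a4MatSet : Set (Matrix (Fin 3) (Fin 3) ℝ) :=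
  {1, P1mat, P2mat, P3mat, Qmat, Qmat * Qmat,
   P1mat * Qmat, P2mat * Qmat, P3mat * Qmat,
   Qmat * Qmat * P1mat, Qmat * Qmat * P2mat, Qmat * Qmat * P3mat}

/-- The matrices of the order-3 group `{id, R₁, R₁²} ≅ Z₃`. -/
def z3MatSet : Set (Matrix (Fin 3) (Fin 3) ℝ) := {1, R1mat, R1mat * R1mat}

/-- The matrices of the order-2 group `{id, P₁} ≅ Z₂`. -/
def z2MatSet : Set (Matrix (Fin 3) (Fin 3) ℝ) := {1, P1mat}

/-- The pair `(K,S)` is in `Z₂`-canonical form with parameters `(lam, mu, a, b, c, d)`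
with respect to the orthonormal basis `e`. -/
def Z2Form (K : V₃ →ₗ[ℝ] V₃ →ₗ[ℝ] V₃) (S : V₃ →ₗ[ℝ] V₃)
    (e : OrthonormalBasis (Fin 3) ℝ V₃) (lam mu a b c d : ℝ) : Prop :=
  K (e 0) (e 0) = (2*lam) • e 0 ∧
  K (e 0) (e 1) = (-lam) • e 1 + mu • e 2 ∧
  K (e 0) (e 2) = mu • e 1 + (-lam) • e 2 ∧
  K (e 1) (e 1) = (-lam) • e 0 ∧
  K (e 1) (e 2) = mu • e 0 ∧
  K (e 2) (e 2) = (-lam) • e 0 ∧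
  S (e 0) = a • e 0 ∧ S (e 1) = b • e 1 + d • e 2 ∧ S (e 2) = d • e 1 + c • e 2

/-- The pair `(K,S)` is in `Z₃`-canonical form with parameters `(lam, mu, a, b)`
with respect to the orthonormal basis `e`. -/
def Z3Form (K : V₃ →ₗ[ℝ] V₃ →ₗ[ℝ] V₃) (S : V₃ →ₗ[ℝ] V₃)
    (e : OrthonormalBasis (Fin 3) ℝ V₃) (lam mu a b : ℝ) : Prop :=
  K (e 0) (e 0) = (2*lam) • e 0 ∧
  K (e 0) (e 1) = (-lam) • e 1 ∧
  K (e 0) (e 2) = (-lam) • e 2 ∧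
  K (e 1) (e 1) = (-lam) • e 0 + mu • e 1 ∧
  K (e 1) (e 2) = (-mu) • e 2 ∧
  K (e 2) (e 2) = (-lam) • e 0 + (-mu) • e 1 ∧
  S (e 0) = a • e 0 ∧ S (e 1) = b • e 1 ∧ S (e 2) = b • e 2

/-- The pair `(K,S)` is in `SO(2)`-canonical form with parameters `(lam, a, b)`
with respect to the orthonormal basis `e`. -/
def SO2Form (K : V₃ →ₗ[ℝ] V₃ →ₗ[ℝ] V₃) (S : V₃ →ₗ[ℝ] V₃)
    (e : OrthonormalBasis (Fin 3) ℝ V₃) (lam a b : ℝ) : Prop :=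
  K (e 0) (e 0) = (2*lam) • e 0 ∧
  K (e 0) (e 1) = (-lam) • e 1 ∧
  K (e 0) (e 2) = (-lam) • e 2 ∧
  K (e 1) (e 1) = (-lam) • e 0 ∧
  K (e 1) (e 2) = 0 ∧
  K (e 2) (e 2) = (-lam) • e 0 ∧
  S (e 0) = a • e 0 ∧ S (e 1) = b • e 1 ∧ S (e 2) = b • e 2

/-- The pair `(K,S)` is in orthogonal-triple canonical form with parameters `(lam, a, b, c)`
with respect to the orthonormal basis `e`. -/
def OTForm (K : V₃ →ₗ[ℝ] V₃ →ₗ[ℝ] V₃) (S : V₃ →ₗ[ℝ] V₃)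
    (e : OrthonormalBasis (Fin 3) ℝ V₃) (lam a b c : ℝ) : Prop :=
  K (e 0) (e 0) = 0 ∧ K (e 1) (e 1) = 0 ∧ K (e 2) (e 2) = 0 ∧
  K (e 0) (e 1) = lam • e 2 ∧
  K (e 0) (e 2) = lam • e 1 ∧
  K (e 1) (e 2) = lam • e 0 ∧
  S (e 0) = a • e 0 ∧ S (e 1) = b • e 1 ∧ S (e 2) = c • e 2

/-- The pair `(K,S)` is in `S₃`-canonical form with parameters `(lam, a, b)`
with respect to the orthonormal basis `e`. -/
def S3Form (K : V₃ →ₗ[ℝ] V₃ →ₗ[ℝ] V₃) (S : V₃ →ₗ[ℝ] V₃)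
    (e : OrthonormalBasis (Fin 3) ℝ V₃) (lam a b : ℝ) : Prop :=
  K (e 0) (e 0) = lam • e 0 ∧
  K (e 0) (e 1) = (-lam) • e 1 ∧
  K (e 1) (e 1) = (-lam) • e 0 ∧
  K (e 0) (e 2) = 0 ∧ K (e 1) (e 2) = 0 ∧ K (e 2) (e 2) = 0 ∧
  S (e 0) = a • e 0 ∧ S (e 1) = a • e 1 ∧ S (e 2) = b • e 2

section Z3Stabilizer

/-! ### Expansion in an orthonormal basis and the axis of `g` -/

theorem expand_three (e : OrthonormalBasis (Fin 3) ℝ V₃) (X : V₃) :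
    X = ⟪e 0, X⟫ • e 0 + ⟪e 1, X⟫ • e 1 + ⟪e 2, X⟫ • e 2 := by
  conv_lhs => rw [← e.sum_repr' X]
  rw [Fin.sum_univ_three]

theorem ext_basis (e : OrthonormalBasis (Fin 3) ℝ V₃) {X Y : V₃}
    (h0 : ⟪e 0, X⟫ = ⟪e 0, Y⟫) (h1 : ⟪e 1, X⟫ = ⟪e 1, Y⟫) (h2 : ⟪e 2, X⟫ = ⟪e 2, Y⟫) :
    X = Y := by
  rw [expand_three e X, expand_three e Y, h0, h1, h2]

/-- If `1 + g + g² = 0` then `(2g + 1)² = -3`, which is impossible in odd dimension because the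
determinant of the right-hand side is negative. Hence `v + g v + g² v` is a nonzero fixed vector
for some `v`; its sign is chosen to make the cubic form of `K` nonnegative. -/
theorem exists_fixed_unit (K : V₃ →ₗ[ℝ] V₃ →ₗ[ℝ] V₃) (g : V₃ ≃ₗᵢ[ℝ] V₃)
    (hg3 : ∀ X, g (g (g X)) = X) :
    ∃ u : V₃, ‖u‖ = 1 ∧ g u = u ∧ 0 ≤ ⟪K u u, u⟫ := by
  have hex : ∃ v : V₃, v + g v + g (g v) ≠ 0 := by
    by_contra! hall
    let G : V₃ →ₗ[ℝ] V₃ := (g.toLinearEquiv : V₃ →ₗ[ℝ] V₃)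
    have hsq : ((2 : ℝ) • G + 1) * ((2 : ℝ) • G + 1) = (-3 : ℝ) • (1 : V₃ →ₗ[ℝ] V₃) := by
      ext1 v
      have hG : ∀ X, G X = g X := fun X => rfl
      have hv : g (g v) = -v - g v := by
        rw [eq_sub_iff_add_eq, eq_neg_iff_add_eq_zero, ← hall v]; abel
      simp only [Module.End.mul_apply, LinearMap.add_apply, LinearMap.smul_apply, hG,
        Module.End.one_apply, map_add, map_smul, hv]
      module
    have hdet := congrArg LinearMap.det hsq
    rw [map_mul, LinearMap.det_smul, map_one, finrank_euclideanSpace_fin] at hdet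
    nlinarith [mul_self_nonneg (LinearMap.det ((2 : ℝ) • G + 1))]
  obtain ⟨v, hv⟩ := hex
  set w := v + g v + g (g v) with hw
  have hfix : g w = w := by
    rw [hw]; simp only [map_add, hg3]; abel
  have hn : ‖(‖w‖⁻¹ : ℝ) • w‖ = 1 := by
    rw [norm_smul, norm_inv, norm_norm, inv_mul_cancel₀ (norm_ne_zero_iff.mpr hv)]
  have hf : g ((‖w‖⁻¹ : ℝ) • w) = (‖w‖⁻¹ : ℝ) • w := by rw [map_smul, hfix]
  set u := (‖w‖⁻¹ : ℝ) • w
  rcases le_total 0 ⟪K u u, u⟫ with h | h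
  · exact ⟨u, hn, hf, h⟩
  · refine ⟨-u, by rwa [norm_neg], by rw [map_neg, hf], ?_⟩
    simp only [map_neg, LinearMap.neg_apply, neg_neg, inner_neg_right]
    linarith

theorem exists_basis_zero {u : V₃} (hu : ‖u‖ = 1) :
    ∃ f : OrthonormalBasis (Fin 3) ℝ V₃, f 0 = u := by
  have h : Orthonormal ℝ (Set.domRestrict ({0} : Set (Fin 3)) (fun _ => u)) := by
    refine ⟨fun i => by simpa using hu, fun i j hij => ?_⟩
    exact absurd (Subsingleton.elim i j) hij
  obtain ⟨b, hb⟩ := Orthonormal.exists_orthonormalBasis_extension_of_card_eq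
    (by simp) h
  exact ⟨b, hb 0 rfl⟩

/-- A nontrivial isometry of order three fixing `e 0` rotates the plane of `e 1, e 2` by
`±2π/3`. Since `g² = g⁻¹` is the adjoint of `g`, this is elementary algebra in the entries of the
lower right block. -/
theorem order_three_form (e : OrthonormalBasis (Fin 3) ℝ V₃) (g : V₃ ≃ₗᵢ[ℝ] V₃)
    (hg1 : g ≠ 1) (hg3 : ∀ X, g (g (g X)) = X) (h0 : g (e 0) = e 0) :
    ∃ r : ℝ, r ^ 2 = 3 / 4 ∧ g (e 1) = (-(1 / 2) : ℝ) • e 1 + r • e 2 ∧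
      g (e 2) = (-r) • e 1 + (-(1 / 2) : ℝ) • e 2 := by
  have h01 : ⟪e 0, g (e 1)⟫ = 0 := by
    conv_lhs => rw [← h0]
    rw [g.inner_map_map, e.inner_eq_ite]; simp
  have h02 : ⟪e 0, g (e 2)⟫ = 0 := by
    conv_lhs => rw [← h0]
    rw [g.inner_map_map, e.inner_eq_ite]; simp
  have e1 := expand_three e (g (e 1))
  have e2 := expand_three e (g (e 2))
  rw [h01, zero_smul, zero_add] at e1
  rw [h02, zero_smul, zero_add] at e2
  set p := ⟪e 1, g (e 1)⟫
  set r := ⟪e 2, g (e 1)⟫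
  set q := ⟪e 1, g (e 2)⟫
  set s := ⟪e 2, g (e 2)⟫
  have plane : ∀ a b c d : ℝ, ⟪a • e 1 + b • e 2, c • e 1 + d • e 2⟫ = a * c + b * d := by
    intro a b c d
    simp only [inner_add_left, inner_add_right, inner_smul_left, inner_smul_right,
      e.inner_eq_ite, Fin.reduceEq, ↓reduceIte, conj_trivial]
    ring
  have n11 : p * p + r * r = 1 := by
    have := g.inner_map_map (e 1) (e 1)
    rw [e1, plane] at this
    simpa using this
  have n22 : q * q + s * s = 1 := by
    have := g.inner_map_map (e 2) (e 2)
    rw [e2, plane] at this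
    simpa using this
  have adj : ∀ X Y, ⟪g (g X), Y⟫ = ⟪X, g Y⟫ := fun X Y => by
    rw [← g.inner_map_map (g (g X)) Y, hg3]
  have a11 : p * p + r * q = p := by
    have := adj (e 1) (e 1)
    rw [e1] at this
    simp only [map_add, map_smul, e1, e2] at this
    simpa [inner_add_left, inner_add_right, inner_smul_left, inner_smul_right,
      e.inner_eq_ite] using this
  have a12 : p * r + r * s = q := by
    have := adj (e 1) (e 2)
    rw [e1] at this
    simp only [map_add, map_smul, e1, e2] at this
    simpa [inner_add_left, inner_add_right, inner_smul_left, inner_smul_right,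
      e.inner_eq_ite] using this
  have a21 : q * p + s * q = r := by
    have := adj (e 2) (e 1)
    rw [e2] at this
    simp only [map_add, map_smul, e1, e2] at this
    simpa [inner_add_left, inner_add_right, inner_smul_left, inner_smul_right,
      e.inner_eq_ite] using this
  have a22 : q * r + s * s = s := by
    have := adj (e 2) (e 2)
    rw [e2] at this
    simp only [map_add, map_smul, e1, e2] at this
    simpa [inner_add_left, inner_add_right, inner_smul_left, inner_smul_right,
      e.inner_eq_ite] using this
  clear_value p q r s
  by_cases hr : r = 0
  · subst hr
    have hq : q = 0 := by linarith
    subst hq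
    have hp : p = 1 := by linarith
    have hs : s = 1 := by linarith
    refine absurd ?_ hg1
    ext1 X
    rw [LinearIsometryEquiv.coe_one, id]
    conv_lhs => rw [expand_three e X]
    conv_rhs => rw [expand_three e X]
    simp only [map_add, map_smul, e1, e2, h0, hp, hs, zero_smul, one_smul, zero_add, add_zero]
  · have hps : (p + s - 1) * (p + s + 1) = 0 := by
      have : r * ((p + s - 1) * (p + s + 1)) = 0 := by
        linear_combination (p + s) * a12 + a21
      exact (mul_eq_zero.mp this).resolve_left hr
    rcases mul_eq_zero.mp hps with h | h
    · have hq : q = r := by linear_combination -a12 + r * h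
      have : p = 1 := by rw [hq] at a11; linarith
      exact absurd (by nlinarith : r * r = 0) (by simpa using hr)
    · have hq : q = -r := by linear_combination -a12 + r * h
      have hp : (p - 1) * (2 * p + 1) = 0 := by
        rw [hq] at a11; linear_combination a11 + n11
      rcases mul_eq_zero.mp hp with h' | h'
      · have : p = 1 := by linarith
        exact absurd (by nlinarith : r * r = 0) (by simpa using hr)
      · have hp' : p = -(1 / 2) := by linarith
        have hs' : s = -(1 / 2) := by linarith
        subst hp' hs' hq
        exact ⟨r, by linarith, e1, e2⟩

/-! ### Invariant tensors and the normal form -/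

/-- Apolarity in an orthonormal basis. -/
theorem trace_components {K : V₃ →ₗ[ℝ] V₃ →ₗ[ℝ] V₃} (hK : IsAdmissibleK K)
    (e : OrthonormalBasis (Fin 3) ℝ V₃) (X : V₃) :
    ⟪e 0, K X (e 0)⟫ + ⟪e 1, K X (e 1)⟫ + ⟪e 2, K X (e 2)⟫ = 0 := by
  have := hK.2.2 X
  rwa [LinearMap.trace_eq_sum_inner _ e, Fin.sum_univ_three] at this

/-- A rotation by `±2π/3` of the plane leaves no nonzero linear form invariant. -/
theorem plane_vec {r x y : ℝ} (hr : r ^ 2 = 3 / 4) (h1 : -(1 / 2) * x + r * y = x)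
    (h2 : -r * x + -(1 / 2) * y = y) : x = 0 ∧ y = 0 := by
  constructor
  · linear_combination (-1 / 2) * h1 - (1 / 3) * r * h2 - (1 / 3) * x * hr
  · linear_combination (-1 / 2) * h2 + (1 / 3) * r * h1 - (1 / 3) * y * hr

/-- A symmetric bilinear form on the plane invariant under rotation by `±2π/3` is a multiple of
the inner product. -/
theorem plane_form {r a b d : ℝ} (hr : r ^ 2 = 3 / 4) (h1 : a / 4 - r * b + r ^ 2 * d = a)
    (h2 : r / 2 * a - r ^ 2 * b + b / 4 - r / 2 * d = b) : b = 0 ∧ d = a := by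
  have hD : a - d + 4 / 3 * r * b = 0 := by linear_combination (-4 / 3) * h1 + 4 / 3 * d * hr
  have hb : b = 0 := by
    linear_combination (-1 / 2) * h2 + r / 4 * hD - 5 / 6 * b * hr
  exact ⟨hb, by rw [hb] at hD; linarith⟩

/-- Components of a pair invariant under a rotation by `±2π/3` about `e 0`: by Schur's lemma
everything is determined by `lam`, `a`, `b` and the two components of `K (e 1) (e 1)` in the
plane of rotation. -/
theorem invariant_form {K : V₃ →ₗ[ℝ] V₃ →ₗ[ℝ] V₃} {S : V₃ →ₗ[ℝ] V₃}
    (hK : IsAdmissibleK K) (hS : IsSymmEndo S) (e : OrthonormalBasis (Fin 3) ℝ V₃)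
    (g : V₃ ≃ₗᵢ[ℝ] V₃) {r : ℝ} (hr : r ^ 2 = 3 / 4) (h0 : g (e 0) = e 0)
    (h1 : g (e 1) = (-(1 / 2) : ℝ) • e 1 + r • e 2)
    (h2 : g (e 2) = (-r) • e 1 + (-(1 / 2) : ℝ) • e 2)
    (hgK : ∀ X Y, K (g X) (g Y) = g (K X Y)) (hgS : ∀ X, S (g X) = g (S X)) :
    ∃ lam mu nu a b : ℝ, 2 * lam = ⟪K (e 0) (e 0), e 0⟫ ∧
      mu = ⟪e 1, K (e 1) (e 1)⟫ ∧ nu = ⟪e 2, K (e 1) (e 1)⟫ ∧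
      K (e 0) (e 0) = (2 * lam) • e 0 ∧
      K (e 0) (e 1) = (-lam) • e 1 ∧
      K (e 0) (e 2) = (-lam) • e 2 ∧
      K (e 1) (e 1) = (-lam) • e 0 + mu • e 1 + nu • e 2 ∧
      K (e 1) (e 2) = nu • e 1 + (-mu) • e 2 ∧
      K (e 2) (e 2) = (-lam) • e 0 + (-mu) • e 1 + (-nu) • e 2 ∧
      S (e 0) = a • e 0 ∧ S (e 1) = b • e 1 ∧ S (e 2) = b • e 2 := by
  -- symmetry in the last two slots of the trilinear form `⟪Z, K X Y⟫`
  have sw : ∀ X Y Z, ⟪Y, K X Z⟫ = ⟪Z, K X Y⟫ := fun X Y Z => by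
    rw [real_inner_comm, hK.2.1 X Z Y, real_inner_comm]
  have c : ∀ X Y, K X Y = K Y X := hK.1
  have T : ∀ X Y Z, ⟪g Z, K (g X) (g Y)⟫ = ⟪Z, K X Y⟫ := fun X Y Z => by
    rw [hgK, g.inner_map_map]
  have TS : ∀ X Z, ⟪g Z, S (g X)⟫ = ⟪Z, S X⟫ := fun X Z => by
    rw [hgS, g.inner_map_map]
  have t0 := trace_components hK e (e 0)
  have t1 := trace_components hK e (e 1)
  have t2 := trace_components hK e (e 2)
  -- total symmetry expresses all components of the cubic form through a few of them
  have s100 : ⟪e 0, K (e 0) (e 1)⟫ = ⟪e 1, K (e 0) (e 0)⟫ := sw _ _ _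
  have s200 : ⟪e 0, K (e 0) (e 2)⟫ = ⟪e 2, K (e 0) (e 0)⟫ := sw _ _ _
  have s012 : ⟪e 1, K (e 0) (e 2)⟫ = ⟪e 2, K (e 0) (e 1)⟫ := sw _ _ _
  have s110 : ⟪e 0, K (e 1) (e 1)⟫ = ⟪e 1, K (e 0) (e 1)⟫ := by rw [sw, c]
  have s120 : ⟪e 0, K (e 1) (e 2)⟫ = ⟪e 2, K (e 0) (e 1)⟫ := by rw [sw, c]
  have s220 : ⟪e 0, K (e 2) (e 2)⟫ = ⟪e 2, K (e 0) (e 2)⟫ := by rw [sw, c]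
  have s121 : ⟪e 1, K (e 1) (e 2)⟫ = ⟪e 2, K (e 1) (e 1)⟫ := sw _ _ _
  have s221 : ⟪e 1, K (e 2) (e 2)⟫ = ⟪e 2, K (e 1) (e 2)⟫ := by rw [sw, c]
  have c10 := c (e 1) (e 0)
  have c20 := c (e 2) (e 0)
  have c21 := c (e 2) (e 1)
  rw [c10, s100] at t1
  rw [c20, s200, c21, s121] at t2
  have i1 := T (e 0) (e 0) (e 1)
  have i2 := T (e 0) (e 0) (e 2)
  have i3 := T (e 0) (e 1) (e 1)
  have i4 := T (e 0) (e 1) (e 2)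
  have j1 := TS (e 0) (e 1)
  have j2 := TS (e 0) (e 2)
  have j3 := TS (e 1) (e 1)
  have j4 := TS (e 1) (e 2)
  have v01 : ⟪e 0, S (e 1)⟫ = ⟪e 1, S (e 0)⟫ := by rw [← hS, real_inner_comm]
  have v02 : ⟪e 0, S (e 2)⟫ = ⟪e 2, S (e 0)⟫ := by rw [← hS, real_inner_comm]
  have v12 : ⟪e 1, S (e 2)⟫ = ⟪e 2, S (e 1)⟫ := by rw [← hS, real_inner_comm]
  simp only [h0, h1, h2, map_add, map_smul, inner_add_left, inner_add_right, inner_smul_left,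
    inner_smul_right, conj_trivial, s012, v12]
    at i1 i2 i3 i4 j1 j2 j3 j4
  obtain ⟨k001, k002⟩ := plane_vec hr i1 i2
  obtain ⟨l01, l02⟩ := plane_vec hr j1 j2
  obtain ⟨k012, k022⟩ := plane_form (a := ⟪e 1, K (e 0) (e 1)⟫)
    (b := ⟪e 2, K (e 0) (e 1)⟫) (d := ⟪e 2, K (e 0) (e 2)⟫) hr (by linear_combination i3) (by linear_combination i4)
  obtain ⟨l12, l22⟩ := plane_form (a := ⟪e 1, S (e 1)⟫)
    (b := ⟪e 2, S (e 1)⟫) (d := ⟪e 2, S (e 2)⟫) hr (by linear_combination j3) (by linear_combination j4)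
  refine ⟨⟪e 0, K (e 0) (e 0)⟫ / 2, _, _, ⟪e 0, S (e 0)⟫, ⟪e 1, S (e 1)⟫, ?_, rfl, rfl,
    ?_, ?_, ?_, ?_, ?_, ?_, ?_, ?_, ?_⟩
  · rw [real_inner_comm]; ring
  all_goals
    apply ext_basis e <;>
    simp only [inner_add_right, inner_smul_right, e.inner_eq_ite, Fin.reduceEq, ↓reduceIte, s100, s200, s012, s110,
      s120, s220, s121, s221, k001, k002, k012, l01, l02, l12, v01, v02, v12] <;>
    norm_num <;> linarith

/-- Writing `z = x + iy` for `x f₁ + y f₂`, the cubic form of `K` on the plane of `f 1, f 2` is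
`Re ((mu - i nu) z³)`; rotating by a third of the argument of `mu + i nu` makes the second
coefficient zero and the first one nonnegative. -/
theorem exists_rotated_basis {K : V₃ →ₗ[ℝ] V₃ →ₗ[ℝ] V₃} (hK : IsAdmissibleK K)
    (f : OrthonormalBasis (Fin 3) ℝ V₃) {lam mu nu : ℝ}
    (h11 : K (f 1) (f 1) = (-lam) • f 0 + mu • f 1 + nu • f 2)
    (h12 : K (f 1) (f 2) = nu • f 1 + (-mu) • f 2)
    (h22 : K (f 2) (f 2) = (-lam) • f 0 + (-mu) • f 1 + (-nu) • f 2) :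
    ∃ e : OrthonormalBasis (Fin 3) ℝ V₃, e 0 = f 0 ∧
      0 ≤ ⟪e 1, K (e 1) (e 1)⟫ ∧ ⟪e 2, K (e 1) (e 1)⟫ = 0 := by
  obtain ⟨t, R, hR, hmu, hnu⟩ :
      ∃ t R : ℝ, 0 ≤ R ∧ R * Real.cos (3 * t) = mu ∧ R * Real.sin (3 * t) = nu := by
    refine ⟨Complex.arg ⟨mu, nu⟩ / 3, ‖(⟨mu, nu⟩ : ℂ)‖, norm_nonneg _, ?_, ?_⟩
    · rw [mul_div_cancel₀ _ (by norm_num : (3 : ℝ) ≠ 0), Complex.norm_mul_cos_arg]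
    · rw [mul_div_cancel₀ _ (by norm_num : (3 : ℝ) ≠ 0), Complex.norm_mul_sin_arg]
  have h21 : K (f 2) (f 1) = nu • f 1 + (-mu) • f 2 := by rw [hK.1, h12]
  have hcs := Real.sin_sq_add_cos_sq t
  have hcs3 := Real.sin_sq_add_cos_sq (3 * t)
  have c3 := Real.cos_three_mul t
  have s3 := Real.sin_three_mul t
  set x := Real.cos t
  set y := Real.sin t
  let v : Fin 3 → V₃ := ![f 0, x • f 1 + y • f 2, (-y) • f 1 + x • f 2]
  have hv : Orthonormal ℝ v := by
    rw [orthonormal_iff_ite]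
    intro i j
    fin_cases i <;> fin_cases j <;>
      simp only [v, Fin.zero_eta, Fin.mk_one, Fin.reduceFinMk, Matrix.cons_val, inner_add_left,
        inner_add_right, inner_smul_left, inner_smul_right, f.inner_eq_ite, Fin.reduceEq, ↓reduceIte,
        conj_trivial] <;>
      first | done | linear_combination hcs | ring
  obtain ⟨e, he⟩ := Orthonormal.exists_orthonormalBasis_extension_of_card_eq
    (s := Set.univ) (v := v) (by simp) (hv.comp _ Subtype.val_injective)
  have e0 : e 0 = f 0 := he 0 trivial
  have e1 : e 1 = x • f 1 + y • f 2 := he 1 trivial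
  have e2 : e 2 = (-y) • f 1 + x • f 2 := he 2 trivial
  have hx : Real.cos (3 * t) = x ^ 3 - 3 * x * y ^ 2 := by
    rw [c3]; linear_combination 3 * x * hcs
  have hy : Real.sin (3 * t) = 3 * x ^ 2 * y - y ^ 3 := by
    rw [s3]; linear_combination -3 * y * hcs
  rw [hx, hy] at hcs3
  rw [hx] at hmu
  rw [hy] at hnu
  subst hmu hnu
  refine ⟨e, e0, ?_, ?_⟩
  · have : ⟪e 1, K (e 1) (e 1)⟫ = R := by
      rw [e1]
      simp only [map_add, map_smul, LinearMap.add_apply, LinearMap.smul_apply, h11, h12, h21, h22,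
        inner_add_left, inner_add_right, inner_smul_left, inner_smul_right, f.inner_eq_ite,
        Fin.reduceEq, ↓reduceIte, conj_trivial]
      linear_combination R * hcs3
    rw [this]; exact hR
  · rw [e1, e2]
    simp only [map_add, map_smul, LinearMap.add_apply, LinearMap.smul_apply, h11, h12, h21, h22,
      inner_add_left, inner_add_right, inner_smul_left, inner_smul_right, f.inner_eq_ite,
      Fin.reduceEq, ↓reduceIte, conj_trivial]
    ring

/-! ### Half-turns and the parameter constraints -/

/-- For `w ≠ 0` the reflection in the line `ℝ w` is the half-turn about `w`, an element of order
two, so it cannot lie in a stabilizer of exponent three. (For `w = 0` it is `-1`.) -/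
theorem half_turn_not_mem {K : V₃ →ₗ[ℝ] V₃ →ₗ[ℝ] V₃} {S : V₃ →ₗ[ℝ] V₃}
    (hcub : ∀ h ∈ stab K S, h ^ 3 = 1) (w : V₃) :
    (ℝ ∙ w).reflection ∉ stab K S := by
  intro hmem
  have h3 := hcub _ hmem
  rw [pow_succ, pow_two, Submodule.reflection_mul_reflection, one_mul] at h3
  have htop : (ℝ ∙ w) = ⊤ := by
    rw [eq_top_iff]
    intro x _
    rw [← Submodule.reflection_eq_self_iff, h3]
    rfl
  have h1 := finrank_span_le_card (R := ℝ) ({w} : Set V₃)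
  rw [htop, finrank_top, finrank_euclideanSpace_fin] at h1
  simp at h1

/-- It suffices to check that a half-turn preserves `(K,S)` on basis vectors. -/
theorem stab_of_basis {K : V₃ →ₗ[ℝ] V₃ →ₗ[ℝ] V₃} {S : V₃ →ₗ[ℝ] V₃} (hK : IsAdmissibleK K)
    (e : OrthonormalBasis (Fin 3) ℝ V₃) {w : V₃} (hw : w ≠ 0)
    (h00 : K ((ℝ ∙ w).reflection (e 0)) ((ℝ ∙ w).reflection (e 0))
      = (ℝ ∙ w).reflection (K (e 0) (e 0)))
    (h01 : K ((ℝ ∙ w).reflection (e 0)) ((ℝ ∙ w).reflection (e 1))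
      = (ℝ ∙ w).reflection (K (e 0) (e 1)))
    (h02 : K ((ℝ ∙ w).reflection (e 0)) ((ℝ ∙ w).reflection (e 2))
      = (ℝ ∙ w).reflection (K (e 0) (e 2)))
    (h11 : K ((ℝ ∙ w).reflection (e 1)) ((ℝ ∙ w).reflection (e 1))
      = (ℝ ∙ w).reflection (K (e 1) (e 1)))
    (h12 : K ((ℝ ∙ w).reflection (e 1)) ((ℝ ∙ w).reflection (e 2))
      = (ℝ ∙ w).reflection (K (e 1) (e 2)))
    (h22 : K ((ℝ ∙ w).reflection (e 2)) ((ℝ ∙ w).reflection (e 2))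
      = (ℝ ∙ w).reflection (K (e 2) (e 2)))
    (s0 : S ((ℝ ∙ w).reflection (e 0)) = (ℝ ∙ w).reflection (S (e 0)))
    (s1 : S ((ℝ ∙ w).reflection (e 1)) = (ℝ ∙ w).reflection (S (e 1)))
    (s2 : S ((ℝ ∙ w).reflection (e 2)) = (ℝ ∙ w).reflection (S (e 2))) :
    (ℝ ∙ w).reflection ∈ stab K S := by
  have h10 := h01
  have h20 := h02
  have h21 := h12
  rw [hK.1 (e _), hK.1] at h10 h20 h21
  refine ⟨?_, fun X Y => ?_, fun X => ?_⟩
  · have : Fact (Module.finrank ℝ V₃ = 2 + 1) := ⟨by simp⟩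
    rw [Submodule.det_reflection, Submodule.finrank_orthogonal_span_singleton (n := 2) hw]
    norm_num
  · rw [expand_three e X, expand_three e Y]
    simp only [map_add, map_smul, LinearMap.add_apply, LinearMap.smul_apply, h00, h01, h02, h10,
      h11, h12, h20, h21, h22]
  · rw [expand_three e X]
    simp only [map_add, map_smul, s0, s1, s2]

/-- If one of the three conditions fails, a half-turn preserves `(K,S)`: about `e 0` when `mu = 0`,
about `e 1` when `lam = 0`, and about `e 0 + √2 e 1` when `mu = √2 lam` and `a = b`. In the last
case `S` is scalar and the cubic form is that of a regular tetrahedron with `e 0` pointing to a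
vertex; `e 0 + √2 e 1` points to the midpoint of an edge. -/
theorem parameter_constraints {K : V₃ →ₗ[ℝ] V₃ →ₗ[ℝ] V₃} {S : V₃ →ₗ[ℝ] V₃}
    (hK : IsAdmissibleK K) (hcub : ∀ h ∈ stab K S, h ^ 3 = 1)
    (e : OrthonormalBasis (Fin 3) ℝ V₃) {lam mu a b : ℝ} (hF : Z3Form K S e lam mu a b) :
    mu ≠ 0 ∧ lam ≠ 0 ∧ (mu = Real.sqrt 2 * lam → a ≠ b) := by
  obtain ⟨k00, k01, k02, k11, k12, k22, s0, s1, s2⟩ := hF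
  have k10 : K (e 1) (e 0) = (-lam) • e 1 := by rw [hK.1, k01]
  refine ⟨?_, ?_, ?_⟩
  · rintro rfl
    have r0 : (ℝ ∙ e 0).reflection (e 0) = e 0 := by
      rw [Submodule.reflection_singleton_apply]; simp [two_smul]
    have r1 : (ℝ ∙ e 0).reflection (e 1) = -e 1 := by
      rw [Submodule.reflection_singleton_apply]; simp [e.inner_eq_ite]
    have r2 : (ℝ ∙ e 0).reflection (e 2) = -e 2 := by
      rw [Submodule.reflection_singleton_apply]; simp [e.inner_eq_ite]
    refine half_turn_not_mem hcub (e 0) (stab_of_basis hK e (e.orthonormal.ne_zero 0)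
      ?_ ?_ ?_ ?_ ?_ ?_ ?_ ?_ ?_) <;>
    simp only [r0, r1, r2, k00, k01, k02, k11, k12, k22, s0, s1, s2, map_add, map_smul,
      map_neg, LinearMap.neg_apply] <;> module
  · rintro rfl
    have r0 : (ℝ ∙ e 1).reflection (e 0) = -e 0 := by
      rw [Submodule.reflection_singleton_apply]; simp [e.inner_eq_ite]
    have r1 : (ℝ ∙ e 1).reflection (e 1) = e 1 := by
      rw [Submodule.reflection_singleton_apply]; simp [two_smul]
    have r2 : (ℝ ∙ e 1).reflection (e 2) = -e 2 := by
      rw [Submodule.reflection_singleton_apply]; simp [e.inner_eq_ite]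
    refine half_turn_not_mem hcub (e 1) (stab_of_basis hK e (e.orthonormal.ne_zero 1)
      ?_ ?_ ?_ ?_ ?_ ?_ ?_ ?_ ?_) <;>
    simp only [r0, r1, r2, k00, k01, k02, k11, k12, k22, s0, s1, s2, map_add, map_smul,
      map_neg, LinearMap.neg_apply] <;> module
  · rintro rfl rfl
    have hsq : Real.sqrt 2 * Real.sqrt 2 = 2 := Real.mul_self_sqrt (by norm_num)
    set q := Real.sqrt 2
    have hn : ⟪e 0 + q • e 1, e 0 + q • e 1⟫ = 3 := by
      simp only [inner_add_left, inner_add_right, inner_smul_left, inner_smul_right,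
        e.inner_eq_ite, conj_trivial]
      norm_num
      linarith
    have hw : e 0 + q • e 1 ≠ 0 := by
      intro h; rw [h, inner_zero_left] at hn; norm_num at hn
    have hn' : ‖e 0 + q • e 1‖ ^ 2 = 3 := by rw [← real_inner_self_eq_norm_sq, hn]
    have hi : ∀ j, ⟪e 0 + q • e 1, e j⟫ = (if 0 = j then 1 else 0) + q * (if 1 = j then 1 else 0) :=
      fun j => by
        simp only [inner_add_left, inner_smul_left, e.inner_eq_ite, conj_trivial]
    have rr : ∀ j, (ℝ ∙ (e 0 + q • e 1)).reflection (e j) =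
        (2 * (⟪e 0 + q • e 1, e j⟫ / 3)) • (e 0 + q • e 1) - e j := fun j => by
      rw [Submodule.reflection_singleton_apply]
      simp only [RCLike.ofReal_real_eq_id, id, hn']
      module
    have r0 : (ℝ ∙ (e 0 + q • e 1)).reflection (e 0) =
        (-(1 / 3) : ℝ) • e 0 + (2 / 3 * q) • e 1 := by
      rw [rr, hi]; norm_num; module
    have r1 : (ℝ ∙ (e 0 + q • e 1)).reflection (e 1) =
        (2 / 3 * q) • e 0 + (1 / 3 : ℝ) • e 1 := by
      rw [rr, hi]; norm_num
      match_scalars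
      · ring
      · linear_combination (2 / 3) * hsq
    have r2 : (ℝ ∙ (e 0 + q • e 1)).reflection (e 2) = -e 2 := by
      rw [rr, hi]; simp
    refine half_turn_not_mem hcub (e 0 + q • e 1) (stab_of_basis hK e hw
      ?_ ?_ ?_ ?_ ?_ ?_ ?_ ?_ ?_) <;>
    simp only [r0, r1, r2, k00, k01, k02, k10, k11, k12, k22, s0, s1, s2, map_add,
      map_smul, map_neg, LinearMap.neg_apply, LinearMap.add_apply, LinearMap.smul_apply] <;>
    match_scalars <;> grind

/-! ### Matrices of isometries -/

theorem matrixOf_injective (e : OrthonormalBasis (Fin 3) ℝ V₃) :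
    Function.Injective (matrixOf e) := by
  intro g h hgh
  have hij : ∀ i j, ⟪e i, g (e j)⟫ = ⟪e i, h (e j)⟫ := fun i j => congrFun (congrFun hgh i) j
  have hj : ∀ j, g (e j) = h (e j) := fun j => ext_basis e (hij 0 j) (hij 1 j) (hij 2 j)
  ext1 X
  rw [expand_three e X]
  simp only [map_add, map_smul, hj]

theorem matrixOf_one (e : OrthonormalBasis (Fin 3) ℝ V₃) : matrixOf e 1 = 1 := by
  ext i j
  simp [matrixOf, e.inner_eq_ite, Matrix.one_apply]

theorem matrixOf_mul (e : OrthonormalBasis (Fin 3) ℝ V₃) (g h : V₃ ≃ₗᵢ[ℝ] V₃) :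
    matrixOf e (g * h) = matrixOf e g * matrixOf e h := by
  ext i j
  rw [Matrix.mul_apply, Fin.sum_univ_three]
  simp only [matrixOf, Matrix.of_apply, LinearIsometryEquiv.coe_mul, Function.comp_apply]
  conv_lhs => rw [expand_three e (h (e j))]
  simp only [map_add, map_smul, inner_add_right, inner_smul_right]
  ring

theorem R1mat_sq : R1mat * R1mat =
    !![1, 0, 0; 0, -(1/2), Real.sqrt 3/2; 0, -(Real.sqrt 3/2), -(1/2)] := by
  have h3 : Real.sqrt 3 * Real.sqrt 3 = 3 := Real.mul_self_sqrt (by norm_num)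
  ext i j
  fin_cases i <;> fin_cases j <;> simp [R1mat, Matrix.mul_apply, Fin.sum_univ_three] <;> grind

theorem R1mat_pow_four : R1mat * R1mat * (R1mat * R1mat) = R1mat := by
  have h3 : Real.sqrt 3 * Real.sqrt 3 = 3 := Real.mul_self_sqrt (by norm_num)
  rw [R1mat_sq]
  ext i j
  fin_cases i <;> fin_cases j <;> simp [R1mat, Matrix.mul_apply, Fin.sum_univ_three] <;> grind

/-- The sign of `r` decides whether `g` is the rotation by `2π/3` or by `4π/3` about `e 0`. -/
theorem matrixOf_order_three (e : OrthonormalBasis (Fin 3) ℝ V₃) (g : V₃ ≃ₗᵢ[ℝ] V₃) {r : ℝ}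
    (hr : r ^ 2 = 3 / 4) (h0 : g (e 0) = e 0)
    (h1 : g (e 1) = (-(1 / 2) : ℝ) • e 1 + r • e 2)
    (h2 : g (e 2) = (-r) • e 1 + (-(1 / 2) : ℝ) • e 2) :
    matrixOf e g = R1mat ∨ matrixOf e g = R1mat * R1mat := by
  have h3 : Real.sqrt 3 * Real.sqrt 3 = 3 := Real.mul_self_sqrt (by norm_num)
  have hfac : (r - Real.sqrt 3 / 2) * (r + Real.sqrt 3 / 2) = 0 := by
    linear_combination hr - h3 / 4
  have hM : matrixOf e g = !![1, 0, 0; 0, -(1/2), -r; 0, r, -(1/2)] := by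
    ext i j
    fin_cases i <;> fin_cases j <;>
      simp [matrixOf, h0, h1, h2, inner_add_right, inner_smul_right, e.inner_eq_ite]
  rcases mul_eq_zero.mp hfac with h | h
  · left
    rw [hM, sub_eq_zero.mp h, R1mat]
  · right
    rw [hM, eq_neg_of_add_eq_zero_left h, R1mat_sq, neg_neg]

end Z3Stabilizer

/-- Lemma 2.2: if the stabilizer of `(K,S)` in `SO(3)` is a cyclic group
of order `3`, then in a suitable orthonormal basis `(K,S)` is in `Z₃`-canonical form with
the listed parameter constraints, and the stabilizer is `{id, R₁, R₁²}`. -/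
theorem statement_2 (K : V₃ →ₗ[ℝ] V₃ →ₗ[ℝ] V₃) (S : V₃ →ₗ[ℝ] V₃)
    (hK : IsAdmissibleK K) (hS : IsSymmEndo S)
    (hcyc : ∃ g : V₃ ≃ₗᵢ[ℝ] V₃, g ≠ 1 ∧ g ^ 3 = 1 ∧
      stab K S = {1, g, g ^ 2}) :
    ∃ e : OrthonormalBasis (Fin 3) ℝ V₃, ∃ lam mu a b : ℝ,
      Z3Form K S e lam mu a b ∧
      ((0 < lam ∧ 0 < mu ∧ mu ≠ Real.sqrt 2 * lam) ∨
       (mu = Real.sqrt 2 * lam ∧ 0 < mu ∧ a ≠ b)) ∧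
      stab K S = {g | matrixOf e g ∈ z3MatSet} := by
  obtain ⟨g, hg1, hg3, hstab⟩ := hcyc
  have hg : g ∈ stab K S := by rw [hstab]; simp
  have hcub : ∀ h ∈ stab K S, h ^ 3 = 1 := by
    intro h hh
    rw [hstab] at hh
    rcases hh with rfl | rfl | rfl
    · exact one_pow 3
    · exact hg3
    · rw [← pow_mul, mul_comm, pow_mul, hg3, one_pow]
  have hg3' : ∀ X, g (g (g X)) = X := fun X => by
    have := DFunLike.congr_fun hg3 X
    simpa [pow_succ] using this
  obtain ⟨-, hgK, hgS⟩ := hg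
  obtain ⟨u, hu, hgu, hKu⟩ := exists_fixed_unit K g hg3'
  obtain ⟨f, rfl⟩ := exists_basis_zero hu
  obtain ⟨e, he0, hmu, hnu⟩ : ∃ e : OrthonormalBasis (Fin 3) ℝ V₃, e 0 = f 0 ∧
      0 ≤ ⟪e 1, K (e 1) (e 1)⟫ ∧ ⟪e 2, K (e 1) (e 1)⟫ = 0 := by
    obtain ⟨r, hr, h1, h2⟩ := order_three_form f g hg1 hg3' hgu
    obtain ⟨lam, mu, nu, a, b, -, -, -, -, -, -, h11, h12, h22, -⟩ :=
      invariant_form hK hS f g hr hgu h1 h2 hgK hgS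
    exact exists_rotated_basis hK f h11 h12 h22
  rw [← he0] at hgu hKu
  obtain ⟨r, hr, h1, h2⟩ := order_three_form e g hg1 hg3' hgu
  obtain ⟨lam, mu, nu, a, b, hlam', hmu', hnu', h00, h01, h02, h11, h12, h22, s0, s1, s2⟩ :=
    invariant_form hK hS e g hr hgu h1 h2 hgK hgS
  rw [← hmu'] at hmu
  rw [← hnu'] at hnu
  subst hnu
  have hF : Z3Form K S e lam mu a b := by
    refine ⟨h00, h01, h02, ?_, ?_, ?_, s0, s1, s2⟩
    · rw [h11, zero_smul, add_zero]
    · rw [h12, zero_smul, zero_add]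
    · rw [h22, neg_zero, zero_smul, add_zero]
  obtain ⟨hm0, hl0, hab⟩ := parameter_constraints hK hcub e hF
  have hmpos : 0 < mu := lt_of_le_of_ne hmu (Ne.symm hm0)
  have hlpos : 0 < lam := lt_of_le_of_ne (by linarith) (Ne.symm hl0)
  refine ⟨e, lam, mu, a, b, hF, ?_, ?_⟩
  · by_cases hms : mu = Real.sqrt 2 * lam
    · exact Or.inr ⟨hms, hmpos, hab hms⟩
    · exact Or.inl ⟨hlpos, hmpos, hms⟩
  · have hsq : matrixOf e (g ^ 2) = matrixOf e g * matrixOf e g := by rw [pow_two, matrixOf_mul]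
    have key : ∀ h, h ∈ stab K S ↔ matrixOf e h ∈
        ({1, matrixOf e g, matrixOf e g * matrixOf e g} : Set (Matrix (Fin 3) (Fin 3) ℝ)) := by
      intro h
      rw [hstab, ← hsq, ← matrixOf_one e]
      simp only [Set.mem_insert_iff, Set.mem_singleton_iff, (matrixOf_injective e).eq_iff]
    ext h
    rw [key, Set.mem_ofPred_eq, z3MatSet]
    rcases matrixOf_order_three e g hr hgu h1 h2 with hM | hM
    · rw [hM]
    · rw [hM, R1mat_pow_four, Set.pair_comm]
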